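/- Let U be a unitary on the n-qubit Hilbert space (ℂ²)^{⊗n} and let ε₁,…,εₙ ≥ 0. Suppose that for each i ∈ {1,…,n} the unitary V_i on (ℂ²)^{⊗n} is an ε_i-approximate local inversion of U on qubit i, meaning Σ_{P∈{X,Y,Z}} ‖V_i† U† P_i U V_i − P_i‖∞ ≤ ε_i. Define the sewed unitary on the doubled system by U_sew := S · (Vₙ⊗I) Sₙ (Vₙ†⊗I) · (Vₙ₋₁⊗I) Sₙ₋₁ (Vₙ₋₁†⊗I) ⋯ (V₁⊗I) S₁ (V₁†⊗I), where each V_i⊗I acts with V_i on the first register. Then ‖U_sew − U ⊗ U†‖∞ ≤ (1/2) Σ_{i=1}^n ε_i. -/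

import Mathlib

/-!
Each qubit swap has the Pauli expansion `Sᵢ = ½ (1 + ∑_P Pᵢ ⊗ Pᵢ)` (`qubitSwap_eq`). Hence
`(Vᵢ ⊗ 1) Sᵢ (Vᵢ† ⊗ 1)` and `(U† ⊗ 1) Sᵢ (U ⊗ 1)` differ by
`½ ∑_P (Vᵢ Pᵢ Vᵢ† - U† Pᵢ U) ⊗ Pᵢ`, whose norm is at most `½ εᵢ` because conjugation by `Vᵢ`
turns the first tensor factor into the local inversion error and tensoring with a unitary does not
increase the norm (`factor_error`).

If every factor is replaced by `(U† ⊗ 1) Sᵢ (U ⊗ 1)`, the sewed operator telescopes to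
`S (U† ⊗ 1) S (U ⊗ 1) = (1 ⊗ U†) (U ⊗ 1) = U ⊗ U†` (`exact_sewing`). All factors are contractions,
so the errors of the individual factors add up (`norm_prod_sub_prod_le`).
-/

open Matrix
open Kronecker

noncomputable section

/-- Operators on the `n`-qubit Hilbert space `(ℂ²)^{⊗n}`, as matrices indexed by bitstrings. -/
abbrev QOp (n : ℕ) := Matrix (Fin n → Fin 2) (Fin n → Fin 2) ℂ

/-- Operators on the doubled system `((ℂ²)^{⊗n}) ⊗ ((ℂ²)^{⊗n})` of two `n`-qubit registers. -/
abbrev DOp (n : ℕ) :=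
  Matrix ((Fin n → Fin 2) × (Fin n → Fin 2)) ((Fin n → Fin 2) × (Fin n → Fin 2)) ℂ

/-- The single-qubit Pauli `X` matrix. -/
def X2 : Matrix (Fin 2) (Fin 2) ℂ := !![0, 1; 1, 0]

/-- The single-qubit Pauli `Y` matrix. -/
def Y2 : Matrix (Fin 2) (Fin 2) ℂ := !![0, -Complex.I; Complex.I, 0]

/-- The single-qubit Pauli `Z` matrix. -/
def Z2 : Matrix (Fin 2) (Fin 2) ℂ := !![1, 0; 0, -1]

/-- The three Pauli matrices `X, Y, Z`. -/
def pauli : Fin 3 → Matrix (Fin 2) (Fin 2) ℂ := ![X2, Y2, Z2]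

/-- The `n`-qubit operator acting as the single-qubit operator `M` on qubit `i`
and as the identity on all other qubits. -/
def localOp {n : ℕ} (M : Matrix (Fin 2) (Fin 2) ℂ) (i : Fin n) : QOp n :=
  Matrix.of fun a b => ∏ j, if j = i then M (a j) (b j) else (if a j = b j then 1 else 0)

/-- The global swap unitary `S` on the doubled system, mapping `|a⟩⊗|b⟩` to `|b⟩⊗|a⟩`. -/
def regSwap (n : ℕ) : DOp n :=
  Matrix.of fun p q => if p.1 = q.2 ∧ p.2 = q.1 then 1 else 0

/-- The unitary `Sᵢ` swapping qubit `i` of the first register with qubit `i` of the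
second register of the doubled system. -/
def qubitSwap (n : ℕ) (i : Fin n) : DOp n :=
  Matrix.of fun p q =>
    if p.1 = Function.update q.1 i (q.2 i) ∧ p.2 = Function.update q.2 i (q.1 i) then 1 else 0

/-- The operator norm (largest singular value) `‖·‖∞` of a square complex matrix,
via its action on Euclidean space. -/
def opNorm {m : Type*} [Fintype m] [DecidableEq m] (A : Matrix m m ℂ) : ℝ :=
  ‖Matrix.toEuclideanCLM (𝕜 := ℂ) A‖

section Helpers

open scoped Matrix.Norms.L2Operator

/-! ### Operators induced by maps of basis states -/

/-- The matrix sending the basis vector `|q⟩` to `|f q⟩`. -/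
def basisMap {ι : Type*} [DecidableEq ι] (f : ι → ι) : Matrix ι ι ℂ :=
  Matrix.of fun p q => if p = f q then 1 else 0

lemma basisMap_mul {ι : Type*} [Fintype ι] [DecidableEq ι] (f g : ι → ι) :
    basisMap f * basisMap g = basisMap (f ∘ g) := by
  ext p q
  simp [basisMap, Matrix.mul_apply]

lemma basisMap_id {ι : Type*} [DecidableEq ι] : basisMap (id : ι → ι) = 1 := by
  ext p q
  simp [basisMap, Matrix.one_apply]

lemma basisMap_mem_unitary {ι : Type*} [Fintype ι] [DecidableEq ι] {f : ι → ι}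
    (hf : Function.Involutive f) : basisMap f ∈ Matrix.unitaryGroup ι ℂ := by
  have h : (basisMap f)ᴴ = basisMap f := by
    ext p q
    have : q = f p ↔ p = f q := by
      constructor <;> (rintro rfl; exact (hf _).symm)
    simp [basisMap, this, apply_ite]
  rw [Matrix.mem_unitaryGroup_iff, Matrix.star_eq_conjTranspose, h, basisMap_mul,
    hf.comp_self, basisMap_id]

/-- The basis map underlying the simultaneous swap of the qubits in `l` between the registers. -/
def swapOn {n : ℕ} (l : List (Fin n)) (q : (Fin n → Fin 2) × (Fin n → Fin 2)) :
    (Fin n → Fin 2) × (Fin n → Fin 2) :=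
  (fun j => if j ∈ l then q.2 j else q.1 j, fun j => if j ∈ l then q.1 j else q.2 j)

lemma swapOn_involutive {n : ℕ} (l : List (Fin n)) : Function.Involutive (swapOn l) := by
  intro q
  ext j <;> by_cases h : j ∈ l <;> simp [swapOn, h]

lemma qubitSwap_eq_basisMap {n : ℕ} (i : Fin n) : qubitSwap n i = basisMap (swapOn [i]) := by
  ext p q
  have h : (p.1 = Function.update q.1 i (q.2 i) ∧ p.2 = Function.update q.2 i (q.1 i)) ↔
      p = swapOn [i] q := by
    have h1 : swapOn [i] q
        = (Function.update q.1 i (q.2 i), Function.update q.2 i (q.1 i)) := by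
      ext j <;> by_cases hj : j = i <;> simp [swapOn, hj]
    rw [h1, Prod.ext_iff]
  simp only [qubitSwap, basisMap, Matrix.of_apply, h]

lemma regSwap_eq_basisMap (n : ℕ) : regSwap n = basisMap Prod.swap := by
  ext p q
  simp [regSwap, basisMap, Prod.ext_iff]

lemma prod_qubitSwap {n : ℕ} (l : List (Fin n)) (hl : l.Nodup) :
    (l.map (qubitSwap n)).prod = basisMap (swapOn l) := by
  induction l with
  | nil =>
    have : (swapOn [] : (Fin n → Fin 2) × (Fin n → Fin 2) → _) = id := by
      funext q; simp [swapOn]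
    simp [this, basisMap_id]
  | cons i l ih =>
    rw [List.nodup_cons] at hl
    rw [List.map_cons, List.prod_cons, ih hl.2, qubitSwap_eq_basisMap, basisMap_mul]
    congr 1
    funext q
    ext j <;> by_cases hj : j = i <;> by_cases hjl : j ∈ l <;>
      simp_all [swapOn]

lemma prod_qubitSwap_finRange (n : ℕ) :
    ((List.finRange n).reverse.map (qubitSwap n)).prod = regSwap n := by
  rw [prod_qubitSwap _ (List.nodup_reverse.2 (List.nodup_finRange n)), regSwap_eq_basisMap]
  congr 1
  funext q
  ext j <;> simp [swapOn]

lemma regSwap_mem_unitary (n : ℕ) : regSwap n ∈ unitary (DOp n) := by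
  rw [regSwap_eq_basisMap]
  exact basisMap_mem_unitary Prod.swap_swap

lemma qubitSwap_mem_unitary {n : ℕ} (i : Fin n) : qubitSwap n i ∈ unitary (DOp n) := by
  rw [qubitSwap_eq_basisMap]
  exact basisMap_mem_unitary (swapOn_involutive _)

lemma regSwap_mul_kronecker {n : ℕ} (A B : QOp n) :
    regSwap n * (A ⊗ₖ B) = (B ⊗ₖ A) * regSwap n := by
  ext ⟨a, b⟩ ⟨c, d⟩
  simp [regSwap, Matrix.mul_apply, Fintype.sum_prod_type, ite_and, mul_comm]

lemma regSwap_mul_self (n : ℕ) : regSwap n * regSwap n = 1 := by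
  rw [regSwap_eq_basisMap, basisMap_mul, Prod.swap_swap_eq, basisMap_id]

/-! ### Pauli operators on one qubit -/

lemma localOp_apply {n : ℕ} (M : Matrix (Fin 2) (Fin 2) ℂ) (i : Fin n) (a b : Fin n → Fin 2) :
    localOp M i a b = if ∀ j, j ≠ i → a j = b j then M (a i) (b i) else 0 := by
  simp only [localOp, Matrix.of_apply]
  split_ifs with h
  · rw [Finset.prod_eq_single i]
    · simp
    · intro j _ hj
      simp [hj, h j hj]
    · simp
  · push Not at h
    obtain ⟨j, hj, hab⟩ := h
    exact Finset.prod_eq_zero (Finset.mem_univ j) (by simp [hj, hab])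

lemma localOp_mul {n : ℕ} (M N : Matrix (Fin 2) (Fin 2) ℂ) (i : Fin n) :
    localOp M i * localOp N i = localOp (M * N) i := by
  ext a b
  simp only [localOp, Matrix.mul_apply, Matrix.of_apply, ← Finset.prod_mul_distrib]
  rw [← Fintype.prod_sum (fun j x => (if j = i then M (a j) x else if a j = x then 1 else 0) *
    (if j = i then N x (b j) else if x = b j then 1 else 0))]
  refine Finset.prod_congr rfl fun j _ => ?_
  by_cases hj : j = i <;> simp [hj]

lemma localOp_one {n : ℕ} (i : Fin n) : localOp 1 i = (1 : QOp n) := by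
  ext a b
  rw [localOp_apply, Matrix.one_apply, Matrix.one_apply, ← ite_and]
  refine if_congr ⟨fun h => funext fun j => ?_, fun h => by simp [h]⟩ rfl rfl
  by_cases hj : j = i
  · rw [hj]; exact h.2
  · exact h.1 j hj

lemma localOp_conjTranspose {n : ℕ} (M : Matrix (Fin 2) (Fin 2) ℂ) (i : Fin n) :
    (localOp M i)ᴴ = localOp Mᴴ i := by
  ext a b
  simp only [Matrix.conjTranspose_apply, localOp_apply, apply_ite star, star_zero]
  simp only [eq_comm]

lemma pauli_mul_star (p : Fin 3) : pauli p * (pauli p)ᴴ = 1 := by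
  fin_cases p <;> ext i j <;> fin_cases i <;> fin_cases j <;>
    simp [pauli, X2, Y2, Z2, Matrix.mul_apply]

lemma localOp_pauli_mem_unitary {n : ℕ} (p : Fin 3) (i : Fin n) :
    localOp (pauli p) i ∈ Matrix.unitaryGroup (Fin n → Fin 2) ℂ := by
  rw [Matrix.mem_unitaryGroup_iff, Matrix.star_eq_conjTranspose, localOp_conjTranspose,
    localOp_mul, pauli_mul_star, localOp_one]

/-- Entrywise form of the Pauli expansion of the swap of two qubits. -/
lemma swap_pauli_entry (a b c d : Fin 2) :
    (if a = d ∧ b = c then (1 : ℂ) else 0) =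
      (1 / 2) * ((if a = c ∧ b = d then 1 else 0) + ∑ p, pauli p a c * pauli p b d) := by
  have h0 : pauli 0 = X2 := rfl
  have h1 : pauli 1 = Y2 := rfl
  have h2 : pauli 2 = Z2 := rfl
  rw [Fin.sum_univ_three, h0, h1, h2]
  fin_cases a <;> fin_cases b <;> fin_cases c <;> fin_cases d <;>
    norm_num [X2, Y2, Z2]

/-- The Pauli expansion `Sᵢ = ½ (1 + ∑_P Pᵢ ⊗ Pᵢ)`. -/
lemma qubitSwap_eq {n : ℕ} (i : Fin n) :
    qubitSwap n i =
      (1 / 2 : ℂ) • (1 + ∑ p, localOp (pauli p) i ⊗ₖ localOp (pauli p) i) := by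
  rw [← Matrix.one_kronecker_one, ← localOp_one i]
  ext ⟨a, b⟩ ⟨c, d⟩
  have key := swap_pauli_entry (a i) (b i) (c i) (d i)
  simp only [qubitSwap, Matrix.of_apply, Matrix.smul_apply, Matrix.add_apply, Matrix.sum_apply,
    Matrix.kroneckerMap_apply, localOp_apply, smul_eq_mul]
  by_cases h1 : ∀ j, j ≠ i → a j = c j
  · by_cases h2 : ∀ j, j ≠ i → b j = d j
    · simp only [if_pos h1, if_pos h2, Function.eq_update_iff]
      rw [Matrix.one_apply, Matrix.one_apply, ite_zero_mul_ite_zero, mul_one, ← key]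
      exact if_congr (by tauto) rfl rfl
    · simp [h2, Function.eq_update_iff]
  · simp [h1, Function.eq_update_iff]

/-! ### Norm estimates -/

lemma norm_le_one_of_unitary {ι : Type*} [Fintype ι] [DecidableEq ι] {A : Matrix ι ι ℂ}
    (hA : A ∈ unitary (Matrix ι ι ℂ)) : ‖A‖ ≤ 1 := by
  rcases subsingleton_or_nontrivial (Matrix ι ι ℂ) with h | h
  · rw [Subsingleton.elim A 0, norm_zero]; exact zero_le_one
  · exact (CStarRing.norm_of_mem_unitary hA).le

/-- `A ↦ A ⊗ 1` as a star algebra homomorphism. -/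
def ampliation (ι κ : Type*) [Fintype ι] [DecidableEq ι] [Fintype κ] [DecidableEq κ] :
    Matrix ι ι ℂ →⋆ₙₐ[ℂ] Matrix (ι × κ) (ι × κ) ℂ where
  toFun A := A ⊗ₖ (1 : Matrix κ κ ℂ)
  map_smul' r A := Matrix.smul_kronecker r A 1
  map_zero' := Matrix.zero_kronecker 1
  map_add' A B := Matrix.add_kronecker A B 1
  map_mul' A B := by rw [← Matrix.mul_kronecker_mul, one_mul]
  map_star' A := by
    simp [Matrix.star_eq_conjTranspose, Matrix.conjTranspose_kronecker]

/-- Star homomorphisms of C⋆-algebras are contractive, so tensoring with `1`, and hence with any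
unitary, does not increase the operator norm. -/
lemma norm_kronecker_le {ι κ : Type*} [Fintype ι] [DecidableEq ι] [Fintype κ] [DecidableEq κ]
    (A : Matrix ι ι ℂ) {P : Matrix κ κ ℂ} (hP : P ∈ Matrix.unitaryGroup κ ℂ) :
    ‖A ⊗ₖ P‖ ≤ ‖A‖ := by
  have h : A ⊗ₖ P = (A ⊗ₖ (1 : Matrix κ κ ℂ)) * ((1 : Matrix ι ι ℂ) ⊗ₖ P) := by
    rw [← Matrix.mul_kronecker_mul, one_mul, mul_one]
  have hu : (1 : Matrix ι ι ℂ) ⊗ₖ P ∈ unitary (Matrix (ι × κ) (ι × κ) ℂ) :=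
    Matrix.kronecker_mem_unitary (one_mem _) hP
  calc ‖A ⊗ₖ P‖ = ‖A ⊗ₖ (1 : Matrix κ κ ℂ)‖ := by rw [h, CStarRing.norm_mul_mem_unitary _ hu]
    _ ≤ ‖A‖ := NonUnitalStarAlgHom.norm_apply_le (ampliation ι κ) A

/-- For contractions, the error of a product is at most the sum of the errors of its factors. -/
lemma norm_prod_sub_prod_le {R α : Type*} [NormedRing R] (hone : ‖(1 : R)‖ ≤ 1) (A B : α → R)
    (hA : ∀ i, ‖A i‖ ≤ 1) (hB : ∀ i, ‖B i‖ ≤ 1) (l : List α) :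
    ‖(l.map A).prod - (l.map B).prod‖ ≤ (l.map fun i => ‖A i - B i‖).sum := by
  have hBprod : ∀ l : List α, ‖(l.map B).prod‖ ≤ 1 := by
    intro l
    induction l with
    | nil => simpa using hone
    | cons i l ih =>
      rw [List.map_cons, List.prod_cons]
      exact (norm_mul_le _ _).trans (mul_le_one₀ (hB i) (norm_nonneg _) ih)
  induction l with
  | nil => simp
  | cons i l ih =>
    simp only [List.map_cons, List.prod_cons, List.sum_cons]
    have h : A i * (l.map A).prod - B i * (l.map B).prod =
        (A i - B i) * (l.map B).prod + A i * ((l.map A).prod - (l.map B).prod) := by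
      noncomm_ring
    rw [h]
    refine (norm_add_le _ _).trans (add_le_add ?_ ?_)
    · exact (norm_mul_le _ _).trans (mul_le_of_le_one_right (norm_nonneg _) (hBprod l))
    · exact ((norm_mul_le _ _).trans (mul_le_of_le_one_left (norm_nonneg _) (hA i))).trans ih

/-! ### The sewing argument -/

/-- Conjugation of a qubit swap by an invertible operator on the first register, in Pauli form. -/
lemma conj_qubitSwap {n : ℕ} (i : Fin n) {W W' : QOp n} (hW : W * W' = 1) :
    (W ⊗ₖ (1 : QOp n)) * qubitSwap n i * (W' ⊗ₖ (1 : QOp n)) =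
      (1 / 2 : ℂ) • (1 + ∑ p, (W * localOp (pauli p) i * W') ⊗ₖ localOp (pauli p) i) := by
  rw [qubitSwap_eq, Matrix.mul_smul, Matrix.smul_mul, mul_add, add_mul, Finset.mul_sum,
    Finset.sum_mul]
  simp only [← Matrix.mul_kronecker_mul, mul_one, one_mul, hW, Matrix.one_kronecker_one]

lemma factor_error {n : ℕ} {U W : QOp n} (hU : U ∈ Matrix.unitaryGroup (Fin n → Fin 2) ℂ)
    (hW : W ∈ Matrix.unitaryGroup (Fin n → Fin 2) ℂ) (i : Fin n) :
    ‖(W ⊗ₖ (1 : QOp n)) * qubitSwap n i * (Wᴴ ⊗ₖ (1 : QOp n)) -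
        (Uᴴ ⊗ₖ (1 : QOp n)) * qubitSwap n i * (U ⊗ₖ (1 : QOp n))‖ ≤
      (1 / 2) * ∑ p, ‖Wᴴ * Uᴴ * localOp (pauli p) i * U * W - localOp (pauli p) i‖ := by
  have hWW : W * Wᴴ = 1 := Matrix.mem_unitaryGroup_iff.1 hW
  have hUU : Uᴴ * U = 1 := Matrix.mem_unitaryGroup_iff'.1 hU
  rw [conj_qubitSwap i hWW, conj_qubitSwap i hUU, ← smul_sub, add_sub_add_left_eq_sub,
    ← Finset.sum_sub_distrib, norm_smul]
  have hhalf : ‖(1 / 2 : ℂ)‖ = 1 / 2 := by norm_num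
  rw [hhalf]
  refine mul_le_mul_of_nonneg_left ?_ (by norm_num)
  refine (norm_sum_le _ _).trans (Finset.sum_le_sum fun p _ => ?_)
  set P := localOp (pauli p) i
  have hP : P ∈ Matrix.unitaryGroup (Fin n → Fin 2) ℂ := localOp_pauli_mem_unitary p i
  have hk : (W * P * Wᴴ) ⊗ₖ P - (Uᴴ * P * U) ⊗ₖ P = (W * P * Wᴴ - Uᴴ * P * U) ⊗ₖ P := by
    ext x y
    simp [sub_mul]
  have hconj : W * P * Wᴴ - Uᴴ * P * U = -(W * (Wᴴ * Uᴴ * P * U * W - P) * Wᴴ) := by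
    have : W * (Wᴴ * Uᴴ * P * U * W - P) * Wᴴ =
        (W * Wᴴ) * (Uᴴ * P * U) * (W * Wᴴ) - W * P * Wᴴ := by noncomm_ring
    rw [this, hWW, one_mul, mul_one, neg_sub]
  have hWs : Wᴴ ∈ unitary (QOp n) := Unitary.star_mem hW
  rw [hk]
  refine (norm_kronecker_le _ hP).trans ?_
  rw [hconj, norm_neg, CStarRing.norm_mul_mem_unitary _ hWs, CStarRing.norm_mem_unitary_mul _ hW]

lemma prod_map_conj {R α : Type*} [Monoid R] {a b : R} (hab : a * b = 1) (hba : b * a = 1)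
    (f : α → R) (l : List α) :
    (l.map fun i => a * f i * b).prod = a * (l.map f).prod * b := by
  induction l with
  | nil => simp [hab]
  | cons i l ih =>
    simp only [List.map_cons, List.prod_cons, ih]
    calc a * f i * b * (a * (l.map f).prod * b)
        = a * f i * (b * a) * (l.map f).prod * b := by simp only [mul_assoc]
      _ = a * (f i * (l.map f).prod) * b := by rw [hba]; simp only [mul_assoc, one_mul]

/-- Sewing the exact local inversions `U†` yields `U ⊗ U†`. -/
lemma exact_sewing {n : ℕ} {U : QOp n} (hU : U ∈ Matrix.unitaryGroup (Fin n → Fin 2) ℂ) :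
    regSwap n * ((List.finRange n).reverse.map fun i =>
      (Uᴴ ⊗ₖ (1 : QOp n)) * qubitSwap n i * (U ⊗ₖ (1 : QOp n))).prod = U ⊗ₖ Uᴴ := by
  have h1 : Uᴴ * U = 1 := Matrix.mem_unitaryGroup_iff'.1 hU
  have h2 : U * Uᴴ = 1 := Matrix.mem_unitaryGroup_iff.1 hU
  rw [prod_map_conj (by rw [← Matrix.mul_kronecker_mul, h1, one_mul, Matrix.one_kronecker_one])
    (by rw [← Matrix.mul_kronecker_mul, h2, one_mul, Matrix.one_kronecker_one]),
    prod_qubitSwap_finRange, ← mul_assoc, ← mul_assoc, regSwap_mul_kronecker,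
    mul_assoc _ (regSwap n) (regSwap n), regSwap_mul_self, mul_one, ← Matrix.mul_kronecker_mul, one_mul,
    mul_one]

lemma conj_qubitSwap_norm_le {n : ℕ} (i : Fin n) {W : QOp n}
    (hW : W ∈ Matrix.unitaryGroup (Fin n → Fin 2) ℂ) :
    ‖(W ⊗ₖ (1 : QOp n)) * qubitSwap n i * (Wᴴ ⊗ₖ (1 : QOp n))‖ ≤ 1 := by
  have hWs : Wᴴ ∈ Matrix.unitaryGroup (Fin n → Fin 2) ℂ := Unitary.star_mem hW
  exact norm_le_one_of_unitary (mul_mem (mul_mem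
    (Matrix.kronecker_mem_unitary hW (one_mem _)) (qubitSwap_mem_unitary i))
    (Matrix.kronecker_mem_unitary hWs (one_mem _)))

lemma sewing_norm_bound {n : ℕ} {U : QOp n}
    (hU : U ∈ Matrix.unitaryGroup (Fin n → Fin 2) ℂ)
    (V : Fin n → QOp n) (hV : ∀ i, V i ∈ Matrix.unitaryGroup (Fin n → Fin 2) ℂ) :
    ‖regSwap n * ((List.finRange n).reverse.map (fun i =>
        ((V i) ⊗ₖ (1 : QOp n)) * qubitSwap n i * ((V i)ᴴ ⊗ₖ (1 : QOp n)))).prod - U ⊗ₖ Uᴴ‖ ≤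
      ∑ i, (1 / 2) * ∑ p,
        ‖(V i)ᴴ * Uᴴ * localOp (pauli p) i * U * V i - localOp (pauli p) i‖ := by
  have hUs : Uᴴ ∈ Matrix.unitaryGroup (Fin n → Fin 2) ℂ := Unitary.star_mem hU
  rw [← exact_sewing hU, ← mul_sub, CStarRing.norm_mem_unitary_mul _ (regSwap_mem_unitary n)]
  refine (norm_prod_sub_prod_le (norm_le_one_of_unitary (one_mem _)) _ _
    (fun i => conj_qubitSwap_norm_le i (hV i)) (fun i => ?_) _).trans ?_
  · have := conj_qubitSwap_norm_le i hUs
    rwa [Matrix.conjTranspose_conjTranspose] at this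
  · rw [List.map_reverse, List.sum_reverse, ← List.ofFn_eq_map, List.sum_ofFn]
    exact Finset.sum_le_sum fun i _ => factor_error hU (hV i) i

end Helpers

/-- **Error bound on sewing local inversions.** If each `Vᵢ` is an `εᵢ`-approximate local
inversion of the `n`-qubit unitary `U` on qubit `i`, i.e.
`Σ_{P∈{X,Y,Z}} ‖Vᵢ† U† Pᵢ U Vᵢ − Pᵢ‖∞ ≤ εᵢ`, then the sewed unitary
`U_sew = S · (Vₙ⊗I) Sₙ (Vₙ†⊗I) ⋯ (V₁⊗I) S₁ (V₁†⊗I)` on the doubled system satisfies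
`‖U_sew − U ⊗ U†‖∞ ≤ (1/2) Σᵢ εᵢ`. -/
theorem sewing_local_inversions_error_bound (n : ℕ) (U : QOp n)
    (hU : U ∈ Matrix.unitaryGroup (Fin n → Fin 2) ℂ)
    (V : Fin n → QOp n) (hV : ∀ i, V i ∈ Matrix.unitaryGroup (Fin n → Fin 2) ℂ)
    (ε : Fin n → ℝ) (hε : ∀ i, 0 ≤ ε i)
    (hloc : ∀ i, ∑ p : Fin 3,
        opNorm ((V i)ᴴ * Uᴴ * localOp (pauli p) i * U * V i - localOp (pauli p) i) ≤ ε i) :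
    opNorm
        (regSwap n *
            ((List.finRange n).reverse.map (fun i =>
              ((V i) ⊗ₖ (1 : QOp n)) * qubitSwap n i * ((V i)ᴴ ⊗ₖ (1 : QOp n)))).prod
          - U ⊗ₖ Uᴴ)
      ≤ (1 / 2) * ∑ i, ε i := by
  rw [Finset.mul_sum]
  exact (sewing_norm_bound hU V hV).trans
    (Finset.sum_le_sum fun i _ => mul_le_mul_of_nonneg_left (hloc i) (by norm_num))
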